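/- Let 𝒜 = (A₁,…,A_q) be a tuple of subsets of an abelian group G, where each A_i is a finite union of bounded or unbounded generalized arithmetic progressions. After refining each bounded linear set into finitely many singleton unbounded linear sets, let s_i denote the total number of resulting unbounded linear pieces in A_i. Then for every r ∈ ℕ, 𝒜 is a chromatic asymptotic (r,ℓ)-approximate group with ℓ = ∏_{i=1}^q C((r+1)(s_i−1), s_i−1). -/

import Mathlib

open Pointwise BigOperators

/-- The `h`-fold iterated sumset `hA = A + ⋯ + A` (`h` times), with `0A = {0}`. -/
def hfold {G : Type*} [AddCommMonoid G] : ℕ → Set G → Set G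
  | 0, _ => {0}
  | n + 1, A => A + hfold n A

/-- The chromatic sumset `h·𝒜 = h₁A₁ + ⋯ + h_qA_q`. -/
def chromSum {G : Type*} [AddCommMonoid G] {q : ℕ} (h : Fin q → ℕ) (A : Fin q → Set G) :
    Set G :=
  ∑ i, hfold (h i) (A i)

/-- `𝒜` is a chromatic asymptotic `(r,ℓ)`-approximate group: there is a threshold vector
`h₀` such that for all `h ⪰ h₀` there is `X_h ⊆ G` with `|X_h| ≤ ℓ` and
`(rh)·𝒜 ⊆ X_h + h·𝒜`. -/
def IsCAAG {G : Type*} [AddCommGroup G] {q : ℕ} (A : Fin q → Set G) (r ℓ : ℕ) : Prop :=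
  ∃ h₀ : Fin q → ℕ, ∀ h : Fin q → ℕ, (∀ i, h₀ i ≤ h i) →
    ∃ X : Finset G, X.card ≤ ℓ ∧
      chromSum (fun i => r * h i) A ⊆ ↑X + chromSum h A

/-- An unbounded linear set `P(a; b₁,…,b_d) = {a + n₁b₁ + ⋯ + n_d b_d : nⱼ ∈ ℕ₀}`. -/
def IsUnboundedLinear {G : Type*} [AddCommMonoid G] (S : Set G) : Prop :=
  ∃ (d : ℕ) (a : G) (b : Fin d → G),
    S = {x | ∃ n : Fin d → ℕ, x = a + ∑ j, n j • b j}

/-- A bounded linear set `P_{m₁,…,m_d}(a; b₁,…,b_d) = {a + n₁b₁ + ⋯ + n_d b_d : 0 ≤ nⱼ ≤ mⱼ}`. -/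
def IsBoundedLinear {G : Type*} [AddCommMonoid G] (S : Set G) : Prop :=
  ∃ (d : ℕ) (a : G) (b : Fin d → G) (m : Fin d → ℕ),
    S = {x | ∃ n : Fin d → ℕ, (∀ j, n j ≤ m j) ∧ x = a + ∑ j, n j • b j}

lemma hfold_char {G : Type*} [AddCommGroup G] {k : ℕ} (a : Fin k → G)
    (M : Fin k → AddSubmonoid G) (A : Set G)
    (hA : ∀ z, z ∈ A ↔ ∃ j, ∃ m ∈ M j, z = a j + m) (h : ℕ) :
    ∀ z, z ∈ hfold h A ↔ ∃ (x : Fin k → ℕ) (m : Fin k → G), ∑ j, x j = h ∧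
      (∀ j, m j ∈ M j) ∧ (∀ j, x j = 0 → m j = 0) ∧ z = ∑ j, (x j • a j + m j) := by
  induction h with
  | zero =>
    intro z
    simp only [hfold, Set.mem_singleton_iff]
    constructor
    · rintro rfl
      exact ⟨0, 0, by simp, fun j => (M j).zero_mem, by simp, by simp⟩
    · rintro ⟨x, m, hx, -, hm, rfl⟩
      have hx0 : ∀ j, x j = 0 := by
        intro j
        exact (Finset.sum_eq_zero_iff.mp hx) j (Finset.mem_univ j)
      apply Finset.sum_eq_zero
      intro j _
      rw [hx0 j, hm j (hx0 j)]
      simp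
  | succ h ih =>
    intro z
    simp only [hfold, Set.mem_add]
    constructor
    · rintro ⟨u, hu, v, hv, rfl⟩
      obtain ⟨j, m₀, hm₀, rfl⟩ := (hA u).1 hu
      obtain ⟨x, m, hx, hm, hz, rfl⟩ := (ih v).1 hv
      refine ⟨x + Pi.single j 1, m + Pi.single j m₀, ?_, ?_, ?_, ?_⟩
      · simp [Finset.sum_add_distrib, hx]
      · intro i
        refine (M i).add_mem (hm i) ?_
        by_cases hij : i = j
        · subst hij; simpa using hm₀
        · simp [Pi.single_eq_of_ne hij, (M i).zero_mem]
      · intro i hi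
        by_cases hij : i = j
        · subst hij; simp at hi
        · simp only [Pi.add_apply, Pi.single_eq_of_ne hij, add_zero] at hi ⊢
          exact hz i hi
      · have e1 : ∑ i, (Pi.single j 1 : Fin k → ℕ) i • a i = a j := by
          rw [Finset.sum_eq_single j] <;> simp +contextual [Pi.single_eq_of_ne]
        have e2 : ∑ i, (Pi.single j m₀ : Fin k → G) i = m₀ := by simp
        simp only [Pi.add_apply, add_smul, Finset.sum_add_distrib, e1, e2]
        abel
    · rintro ⟨x, m, hx, hm, hz, rfl⟩
      obtain ⟨j, hj⟩ : ∃ j, x j ≠ 0 := by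
        by_contra hcon
        push Not at hcon
        simp [hcon] at hx
      have hsx : x j + ∑ i ∈ Finset.univ.erase j, x i = h + 1 := by
        rw [Finset.add_sum_erase _ _ (Finset.mem_univ j), hx]
      refine ⟨a j + m j, (hA _).2 ⟨j, m j, hm j, rfl⟩,
        ∑ i, (Function.update x j (x j - 1) i • a i + Function.update m j 0 i),
        (ih _).2 ⟨Function.update x j (x j - 1), Function.update m j 0, ?_, ?_, ?_, rfl⟩, ?_⟩
      · rw [← Finset.add_sum_erase _ _ (Finset.mem_univ j)]
        rw [Finset.sum_congr rfl (g := fun i => x i)]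
        · simp; omega
        · intro i hi
          rw [Function.update_of_ne (Finset.ne_of_mem_erase hi)]
      · intro i
        by_cases hij : i = j
        · subst hij; simp [(M i).zero_mem]
        · rw [Function.update_of_ne hij]; exact hm i
      · intro i hi
        by_cases hij : i = j
        · subst hij; simp
        · rw [Function.update_of_ne hij] at hi ⊢; exact hz i hi
      · rw [← Finset.add_sum_erase _ _ (Finset.mem_univ j)]
        rw [← Finset.add_sum_erase _ (fun i => x i • a i + m i) (Finset.mem_univ j)]
        rw [Finset.sum_congr rfl (g := fun i => x i • a i + m i)]
        · obtain ⟨n, hn⟩ := Nat.exists_eq_succ_of_ne_zero hj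
          simp only [Function.update_self, hn, Nat.succ_eq_add_one, Nat.add_sub_cancel, add_smul,
            one_smul]
          abel
        · intro i hi
          rw [Function.update_of_ne (Finset.ne_of_mem_erase hi),
            Function.update_of_ne (Finset.ne_of_mem_erase hi)]

lemma exists_step (r d h : ℕ) (hh : d * (r * d + 1) + 1 ≤ h) :
    ∃ t, 0 < t ∧ d * t < h ∧ ∀ S, S * t ≤ r * h → S ≤ r * d := by
  rcases Nat.eq_zero_or_pos d with rfl | hd
  · refine ⟨r * h + 1, by omega, by omega, ?_⟩
    intro S hS
    by_contra hc
    have : 1 ≤ S := by omega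
    have := Nat.mul_le_mul_right (r * h + 1) this
    omega
  · have h1 : r * d + 1 ≤ (h - 1) / d := by
      rw [Nat.le_div_iff_mul_le hd]
      have := Nat.mul_comm d (r * d + 1)
      omega
    have h2 : d * ((h - 1) / d) ≤ h - 1 := Nat.mul_div_le _ _
    have h3 : h - 1 < d * ((h - 1) / d + 1) := Nat.lt_mul_div_succ _ hd
    refine ⟨(h - 1) / d, by omega, by omega, ?_⟩
    generalize (h - 1) / d = t at *
    intro S hS
    by_contra hc
    have h4 : (r * d + 1) * t ≤ S * t := Nat.mul_le_mul_right _ (by omega)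
    have h5 : r * h ≤ r * (d * (t + 1)) := Nat.mul_le_mul_left _ (by omega)
    nlinarith

lemma cover_one {G : Type*} [AddCommGroup G] (A : Set G) (s : ℕ)
    (hrefine : ∃ Q : Fin s → Set G, (∀ j, IsUnboundedLinear (Q j)) ∧ A = ⋃ j, Q j)
    (r : ℕ) (hr : 0 < r) :
    ∃ h₀ : ℕ, ∀ h, h₀ ≤ h → ∃ X : Finset G, X.card ≤ ((r + 1) * (s - 1)).choose (s - 1) ∧
      hfold (r * h) A ⊆ ↑X + hfold h A := by
  classical
  obtain ⟨Q, hQ, hAQ⟩ := hrefine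
  rcases s with _ | d
  · refine ⟨1, fun h hh => ⟨∅, by simp, ?_⟩⟩
    have hA : A = ∅ := by rw [hAQ]; simp
    obtain ⟨n, hn⟩ := Nat.exists_eq_succ_of_ne_zero (Nat.mul_pos hr hh).ne'
    rw [hn, hA]
    simp [hfold]
  · choose D a b hb using hQ
    let M : Fin (d + 1) → AddSubmonoid G := fun j =>
      { carrier := {x | ∃ n : Fin (D j) → ℕ, x = ∑ i, n i • b j i}
        zero_mem' := ⟨0, by simp⟩
        add_mem' := by
          rintro _ _ ⟨n, rfl⟩ ⟨n', rfl⟩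
          exact ⟨n + n', by simp [add_smul, Finset.sum_add_distrib]⟩ }
    have hA : ∀ z, z ∈ A ↔ ∃ j, ∃ m ∈ M j, z = a j + m := by
      intro z
      rw [hAQ, Set.mem_iUnion]
      refine exists_congr fun j => ?_
      rw [hb j]
      constructor
      · rintro ⟨n, rfl⟩
        exact ⟨_, ⟨n, rfl⟩, rfl⟩
      · rintro ⟨_, ⟨n, rfl⟩, rfl⟩
        exact ⟨n, rfl⟩
    clear_value M
    refine ⟨d * (r * d + 1) + 1, fun h hh => ?_⟩
    obtain ⟨t, ht, hdt, hS⟩ := exists_step r d h hh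
    let l := Fin.last d
    let f : (Fin (d + 1) → ℕ) → G := fun y =>
      ((r : ℤ) * h - h) • a l + ∑ j : Fin d, (t * y j.castSucc) • (a j.castSucc - a l)
    refine ⟨(Finset.piAntidiag Finset.univ (r * d)).image f, ?_, ?_⟩
    · refine Finset.card_image_le.trans ?_
      have hcard : (Finset.piAntidiag (Finset.univ : Finset (Fin (d + 1))) (r * d)).card =
          (Finset.finsuppAntidiag (Finset.univ : Finset (Fin (d + 1))) (r * d)).card := by
        refine Finset.card_bij' (fun f _ => Finsupp.equivFunOnFinite.symm f) (fun f _ => ⇑f)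
          ?_ ?_ ?_ ?_
        · intro g hg
          rw [Finset.mem_piAntidiag] at hg
          rw [Finset.mem_finsuppAntidiag]
          exact ⟨by simpa using hg.1, by simp⟩
        · intro g hg
          rw [Finset.mem_finsuppAntidiag] at hg
          rw [Finset.mem_piAntidiag]
          exact ⟨hg.1, by simp⟩
        · intro g hg; rfl
        · intro g hg; ext i; rfl
      rw [hcard, Finset.card_finsuppAntidiag_nat_eq_choose]
      simp only [Finset.card_univ, Fintype.card_fin, Nat.add_sub_cancel]
      apply le_of_eq
      rw [show d + 1 + r * d - 1 = (r + 1) * d by ring_nf; omega]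
      exact Nat.choose_symm_of_eq_add (by ring)
    · intro z hz
      obtain ⟨x, m, hx, hm, hz0, rfl⟩ := (hfold_char a M A hA _ _).1 hz
      rw [Fin.sum_univ_castSucc] at hx
      let y : Fin d → ℕ := fun j => (x j.castSucc - 1) / t
      let e : Fin d → ℕ := fun j => x j.castSucc - t * y j
      have hy : ∀ j, t * y j ≤ x j.castSucc - 1 := fun j => Nat.mul_div_le _ _
      have hy' : ∀ j, x j.castSucc - 1 < t * (y j + 1) := fun j => Nat.lt_mul_div_succ _ ht
      have hxe : ∀ j, x j.castSucc = t * y j + e j := by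
        intro j; have := hy j; simp only [e]; omega
      have het : ∀ j, e j ≤ t := by
        intro j; have h1 := hy' j; have h2 := hxe j; rw [mul_add] at h1; omega
      have he0 : ∀ j, e j = 0 → x j.castSucc = 0 := by
        intro j hj; have h1 := hy j; have h2 := hxe j; omega
      clear_value y e
      have hsum : ∑ j : Fin d, x j.castSucc = t * ∑ j, y j + ∑ j, e j := by
        rw [Finset.mul_sum, ← Finset.sum_add_distrib]
        exact Finset.sum_congr rfl fun j _ => hxe j
      have hE : ∑ j, e j ≤ d * t := by
        simpa using Finset.sum_le_card_nsmul Finset.univ e t (fun j _ => het j)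
      have hY : ∑ j, y j ≤ r * d := by
        apply hS
        rw [mul_comm]
        omega
      rw [Set.mem_add]
      refine ⟨f (Fin.snoc y (r * d - ∑ j, y j)), ?_,
        ∑ j, ((Fin.snoc e (h - ∑ j, e j) : Fin (d + 1) → ℕ) j • a j + m j),
        (hfold_char a M A hA _ _).2 ⟨Fin.snoc e (h - ∑ j, e j), m, ?_, hm, ?_, rfl⟩, ?_⟩
      · refine Finset.mem_coe.2 (Finset.mem_image_of_mem _ ?_)
        rw [Finset.mem_piAntidiag]
        refine ⟨?_, by simp⟩
        rw [Fin.sum_univ_castSucc]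
        simp
        omega
      · rw [Fin.sum_univ_castSucc]
        simp
        omega
      · intro j
        refine Fin.lastCases ?_ (fun i => ?_) j
        · simp only [Fin.snoc_last]
          intro h1
          omega
        · simp only [Fin.snoc_castSucc]
          intro h1
          exact hz0 _ (he0 i h1)
      · have hl : (x l : ℤ) = (r * h - h) - t * ∑ j, (y j : ℤ) + ((h - ∑ j, e j : ℕ) : ℤ) := by
          have h1 : ((h - ∑ j, e j : ℕ) : ℤ) = h - ((∑ j, e j : ℕ) : ℤ) :=
            Nat.cast_sub (by omega)
          have h2 : ((t * ∑ j, y j + ∑ j, e j + x l : ℕ) : ℤ) = ((r * h : ℕ) : ℤ) := by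
            rw [← hsum, ← hx]
          rw [h1]
          push_cast at h2 ⊢
          linarith
        simp only [f, Fin.sum_univ_castSucc, Fin.snoc_castSucc, Fin.snoc_last, hxe, add_smul,
          Finset.sum_add_distrib, smul_sub, Finset.sum_sub_distrib]
        have h3 : x (Fin.last d) • a (Fin.last d) = (x l : ℤ) • a l := (natCast_zsmul _ _).symm
        have h4 : ∑ j, (t * y j) • a l = ((t : ℤ) * ∑ j, (y j : ℤ)) • a l := by
          rw [← Finset.sum_smul, ← Finset.mul_sum, ← natCast_zsmul]
          push_cast
          rfl
        rw [h3, h4, hl, add_smul, sub_smul _ (_ * ∑ j, (y j : ℤ)), natCast_zsmul]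
        simp only [l]
        abel

/-- Tuples of finite unions of bounded or unbounded generalized arithmetic progressions:
if each `Aᵢ` is a finite union of bounded or unbounded linear sets and, after refining
each bounded linear piece into finitely many singleton unbounded linear sets, `Aᵢ` is a
union of `sᵢ` unbounded linear sets, then `𝒜` is a chromatic asymptotic
`(r, ∏ᵢ C((r+1)(sᵢ−1), sᵢ−1))`-approximate group. -/
theorem stmt14 {G : Type*} [AddCommGroup G] {q : ℕ} (A : Fin q → Set G) (s : Fin q → ℕ)
    (hdecomp : ∀ i, ∃ (n : ℕ) (P : Fin n → Set G),
      (∀ j, IsUnboundedLinear (P j) ∨ IsBoundedLinear (P j)) ∧ A i = ⋃ j, P j)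
    (hrefine : ∀ i, ∃ Q : Fin (s i) → Set G,
      (∀ j, IsUnboundedLinear (Q j)) ∧ A i = ⋃ j, Q j)
    (r : ℕ) (hr : 0 < r) :
    IsCAAG A r (∏ i, ((r + 1) * (s i - 1)).choose (s i - 1)) := by
  classical
  choose h₀ H using fun i => cover_one (A i) (s i) (hrefine i) r hr
  refine ⟨h₀, fun h hh => ?_⟩
  choose X hX hsub using fun i => H i (h i) (hh i)
  refine ⟨(Fintype.piFinset X).image (fun g => ∑ i, g i), ?_, ?_⟩
  · refine Finset.card_image_le.trans ?_
    rw [Fintype.card_piFinset]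
    exact Finset.prod_le_prod' fun i _ => hX i
  · intro z hz
    unfold chromSum at hz ⊢
    obtain ⟨g, hg, rfl⟩ := (Set.mem_fintype_sum _ _).1 hz
    choose u hu v hv huv using fun i => Set.mem_add.1 (hsub i (hg i))
    refine Set.mem_add.2 ⟨∑ i, u i, ?_, ∑ i, v i, ?_, ?_⟩
    · exact Finset.mem_coe.2 (Finset.mem_image.2
        ⟨u, Fintype.mem_piFinset.2 fun i => hu i, rfl⟩)
    · exact (Set.mem_fintype_sum _ _).2 ⟨v, hv, rfl⟩
    · rw [← Finset.sum_add_distrib]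
      exact Finset.sum_congr rfl fun i _ => huv i
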